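/- Let f_n, g_n, f, g ∈ C([0,1], ℝ) with f(0) = g(0) = f_n(0) = g_n(0) = 0, and suppose f_n → f and g_n → g uniformly on [0,1]. Then sup{a ≥ 0 : τ^{f_n}_a + τ^{g_n}_a ≤ 1} → sup{a ≥ 0 : τ^f_a + τ^g_a ≤ 1} as n → ∞ (the suprema being taken over those a for which both hitting times are finite). -/

import Mathlib

open MeasureTheory ProbabilityTheory Filter Set
open scoped ENNReal NNReal Classical Topology

namespace CompetitiveErosion

/-! ### Hitting times of continuous functions on `[0,1]` -/

/-- `τ^φ_a = inf {t ∈ [0,1] : |φ(t)| = a}`, the first time `|φ|` hits level `a`. -/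
noncomputable def tauH (φ : ℝ → ℝ) (a : ℝ) : ℝ :=
  sInf {t : ℝ | t ∈ Set.Icc (0 : ℝ) 1 ∧ |φ t| = a}

/-- `sup {a ≥ 0 : τ^f_a + τ^g_a ≤ 1}`, the supremum taken over those `a ≥ 0` for which
both hitting times are finite (i.e. `|f|` and `|g|` both attain the value `a` on `[0,1]`). -/
noncomputable def zOf (f g : ℝ → ℝ) : ℝ :=
  sSup {a : ℝ | 0 ≤ a ∧ (∃ t ∈ Set.Icc (0:ℝ) 1, |f t| = a) ∧
    (∃ t ∈ Set.Icc (0:ℝ) 1, |g t| = a) ∧ tauH f a + tauH g a ≤ 1}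

/-- The hitting time is attained. -/
theorem tauH_mem {φ : ℝ → ℝ} (hφ : ContinuousOn φ (Set.Icc 0 1)) {a : ℝ}
    (h : ∃ t ∈ Set.Icc (0:ℝ) 1, |φ t| = a) :
    tauH φ a ∈ Set.Icc (0:ℝ) 1 ∧ |φ (tauH φ a)| = a := by
  have hc : IsClosed {t : ℝ | t ∈ Set.Icc (0 : ℝ) 1 ∧ |φ t| = a} :=
    hφ.abs.preimage_isClosed_of_isClosed isClosed_Icc (isClosed_singleton (x := a))
  obtain ⟨t, ht, hta⟩ := h
  exact hc.csInf_mem ⟨t, ht, hta⟩ ⟨0, fun x hx => hx.1.1⟩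

/-- If `|φ|` exceeds `a` at time `s`, then it hits `a` before `s`. -/
theorem tauH_le {φ : ℝ → ℝ} (hφ : ContinuousOn φ (Set.Icc 0 1)) (h0 : φ 0 = 0) {a s : ℝ}
    (ha : 0 ≤ a) (hs : s ∈ Set.Icc (0:ℝ) 1) (has : a ≤ |φ s|) :
    (∃ t ∈ Set.Icc (0:ℝ) 1, |φ t| = a) ∧ tauH φ a ≤ s := by
  have hsub : Set.Icc 0 s ⊆ Set.Icc (0:ℝ) 1 := Set.Icc_subset_Icc_right hs.2
  have := intermediate_value_Icc hs.1 (hφ.abs.mono hsub)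
  obtain ⟨t, ht, hta⟩ := this (show a ∈ Set.Icc |φ 0| |φ s| by simp [h0, ha, has])
  refine ⟨⟨t, hsub ht, hta⟩, le_trans ?_ ht.2⟩
  exact csInf_le ⟨0, fun x hx => hx.1.1⟩ ⟨hsub ht, hta⟩

/-- One-sided Lipschitz bound for the constrained level. -/
theorem zOf_le_add {f g f' g' : ℝ → ℝ}
    (hf : ContinuousOn f (Set.Icc 0 1)) (hg : ContinuousOn g (Set.Icc 0 1))
    (hf' : ContinuousOn f' (Set.Icc 0 1)) (hg' : ContinuousOn g' (Set.Icc 0 1))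
    (hf0 : f 0 = 0) (hg0 : g 0 = 0) (hf0' : f' 0 = 0) (hg0' : g' 0 = 0) {ε : ℝ}
    (hfe : ∀ x ∈ Set.Icc (0:ℝ) 1, |f x - f' x| ≤ ε)
    (hge : ∀ x ∈ Set.Icc (0:ℝ) 1, |g x - g' x| ≤ ε) :
    zOf f g ≤ zOf f' g' + ε := by
  have hz : 0 ≤ zOf f' g' := Real.sSup_nonneg fun a ha => ha.1
  have hbdd : BddAbove {a : ℝ | 0 ≤ a ∧ (∃ t ∈ Set.Icc (0:ℝ) 1, |f' t| = a) ∧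
      (∃ t ∈ Set.Icc (0:ℝ) 1, |g' t| = a) ∧ tauH f' a + tauH g' a ≤ 1} := by
    obtain ⟨C, hC⟩ := (isCompact_Icc.image_of_continuousOn hf'.abs).bddAbove
    refine ⟨C, ?_⟩
    rintro a ⟨-, ⟨t, ht, rfl⟩, -⟩
    exact hC ⟨t, ht, rfl⟩
  have hε : 0 ≤ ε := le_trans (abs_nonneg _) (hfe 0 (by simp))
  refine Real.sSup_le ?_ (by linarith)
  rintro a ⟨ha, h1, h2, h3⟩
  by_cases hae : a ≤ ε
  · linarith
  push Not at hae
  obtain ⟨m1, e1⟩ := tauH_mem hf h1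
  obtain ⟨m2, e2⟩ := tauH_mem hg h2
  have b1 : a - ε ≤ |f' (tauH f a)| := by
    have := abs_sub_abs_le_abs_sub (f (tauH f a)) (f' (tauH f a))
    linarith [hfe _ m1]
  have b2 : a - ε ≤ |g' (tauH g a)| := by
    have := abs_sub_abs_le_abs_sub (g (tauH g a)) (g' (tauH g a))
    linarith [hge _ m2]
  obtain ⟨x1, l1⟩ := tauH_le hf' hf0' (by linarith) m1 b1
  obtain ⟨x2, l2⟩ := tauH_le hg' hg0' (by linarith) m2 b2
  have : a - ε ≤ zOf f' g' := le_csSup hbdd ⟨by linarith, x1, x2, by linarith⟩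
  linarith

/-- **Lemma (continuity of the constrained level).** If `f_n → f` and `g_n → g`
uniformly on `[0,1]`, all functions being continuous on `[0,1]` and vanishing at `0`,
then `sup {a ≥ 0 : τ^{f_n}_a + τ^{g_n}_a ≤ 1} → sup {a ≥ 0 : τ^f_a + τ^g_a ≤ 1}`. -/
theorem constrained_level_continuity
    (f g : ℝ → ℝ) (fs gs : ℕ → ℝ → ℝ)
    (hf : ContinuousOn f (Set.Icc 0 1)) (hg : ContinuousOn g (Set.Icc 0 1))
    (hfs : ∀ n, ContinuousOn (fs n) (Set.Icc 0 1))
    (hgs : ∀ n, ContinuousOn (gs n) (Set.Icc 0 1))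
    (hf0 : f 0 = 0) (hg0 : g 0 = 0) (hfs0 : ∀ n, fs n 0 = 0) (hgs0 : ∀ n, gs n 0 = 0)
    (hfconv : TendstoUniformlyOn fs f atTop (Set.Icc 0 1))
    (hgconv : TendstoUniformlyOn gs g atTop (Set.Icc 0 1)) :
    Tendsto (fun n => zOf (fs n) (gs n)) atTop (𝓝 (zOf f g)) := by
  rw [Metric.tendsto_atTop']
  intro ε hε
  rw [Metric.tendstoUniformlyOn_iff] at hfconv hgconv
  obtain ⟨N, hN⟩ := eventually_atTop.1
    ((hfconv (ε / 2) (by linarith)).and (hgconv (ε / 2) (by linarith)))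
  refine ⟨N, fun n hn => ?_⟩
  obtain ⟨h1, h2⟩ := hN n hn.le
  simp only [Real.dist_eq] at h1 h2
  have u1 := zOf_le_add hf hg (hfs n) (hgs n) hf0 hg0 (hfs0 n) (hgs0 n)
    (fun x hx => (h1 x hx).le) (fun x hx => (h2 x hx).le)
  have u2 := zOf_le_add (hfs n) (hgs n) hf hg (hfs0 n) (hgs0 n) hf0 hg0
    (fun x hx => (abs_sub_comm _ _).trans_le (h1 x hx).le)
    (fun x hx => (abs_sub_comm _ _).trans_le (h2 x hx).le)
  rw [Real.dist_eq, abs_lt]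
  constructor <;> linarith

end CompetitiveErosion
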